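/- For each (r−1)-slim partition μ ∈ π_n choose a symmetric polynomial g_μ with highest partition μ, and let {f̃_λ}, with λ ranging over admissible partitions in π_n, be any ℂ-basis of F_n^{(k,2)}; set f_λ = 𝓕(f̃_λ). Then the polynomials {f_λ g_μ}, where μ ranges over all (r−1)-slim partitions in π_n and λ over all admissible partitions in π_n, form a ℂ-basis of F_n^{(k,r)}. -/

import Mathlib

open MvPolynomial

/-- `l` is an `(r-1)`-slim partition of length at most `n`:
consecutive differences are `< r-1` and the last part is `< r-1`. -/
def IsSlim (r n : ℕ) (l : Fin n → ℕ) : Prop :=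
  (∀ i : Fin n, ∀ h : (i : ℕ) + 1 < n, l i - l ⟨(i : ℕ) + 1, h⟩ < r - 1) ∧
  (∀ i : Fin n, (i : ℕ) = n - 1 → l i < r - 1)

/-- The monomial symmetric polynomial `m_λ`: the sum of the distinct monomials obtained
from `x^λ` by permuting the variables. -/
noncomputable def msym (n : ℕ) (l : Fin n → ℕ) : MvPolynomial (Fin n) ℂ :=
  ∑ a ∈ Finset.image (fun w : Equiv.Perm (Fin n) => l ∘ w) Finset.univ,
    MvPolynomial.monomial (Finsupp.equivFunOnFinite.symm a) (1 : ℂ)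

/-- Strict dominance order on partitions of equal weight:
`a < b` iff `a ≠ b`, `|a| = |b|` and all partial sums of `a` are at most those of `b`. -/
def DomLT (n : ℕ) (a b : Fin n → ℕ) : Prop :=
  a ≠ b ∧ (∑ i, a i = ∑ i, b i) ∧
  ∀ i : Fin n, ∑ j ∈ Finset.univ.filter (· ≤ i), a j
    ≤ ∑ j ∈ Finset.univ.filter (· ≤ i), b j

/-- `g` is a symmetric polynomial with highest partition `μ`:
`g = c_μ m_μ + Σ_{ν < μ} c_ν m_ν` with `c_μ ≠ 0` (`<` the dominance order). -/
def HighestPartition (n : ℕ) (g : MvPolynomial (Fin n) ℂ) (μ : Fin n → ℕ) : Prop :=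
  ∃ (S : Finset (Fin n → ℕ)) (coef : (Fin n → ℕ) → ℂ),
    μ ∈ S ∧ coef μ ≠ 0 ∧
    (∀ ν ∈ S, Antitone ν ∧ (ν = μ ∨ DomLT n ν μ)) ∧
    g = ∑ ν ∈ S, coef ν • msym n ν

/-- The Frobenius homomorphism `𝓕 : f(x_1,…,x_n) ↦ f(x_1^{r-1},…,x_n^{r-1})`. -/
noncomputable def Frob (r n : ℕ) (f : MvPolynomial (Fin n) ℂ) : MvPolynomial (Fin n) ℂ :=
  (MvPolynomial.aeval fun i : Fin n =>
    (MvPolynomial.X i : MvPolynomial (Fin n) ℂ) ^ (r - 1)) f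

/-!
Put `m = r - 1`. Dividing the consecutive differences of a partition by `m` writes it as `m λ + μ`
with `μ` slim, so by descent on lexicographic leading terms every symmetric polynomial has the form
`∑ μ, 𝓕(h_μ) g_μ` with `h_μ` symmetric.

There are `m ^ n` slim partitions, as many as there are points with the same `m`-th powers as a
general point `p`. Symmetric polynomials separate these points, so the square matrix of values of
the `g_μ` at them is invertible, and the values of `∑ μ, 𝓕(h_μ) g_μ` at them determine all
`h_μ(p ^ m)`.

At a generic point of the affine space this shows that the `h_μ` are unique. The planes defining
`F_n^{(k,r)}` are permuted by multiplying coordinates with `m`-th roots of unity, so at a generic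
point of such a plane it shows that `∑ μ, 𝓕(h_μ) g_μ` lies in `F_n^{(k,r)}` exactly when every
`h_μ` lies in `F_n^{(k,2)}` taken with `t ^ m` instead of `t`. That is the same space, since `t ^ m`
is again a primitive `(k+1)`-th root of unity and symmetric polynomials ignore the order of
coordinates.
-/

/-! ### Lexicographic leading exponents -/

section LexLead

open AddMonoidAlgebra

section Expand

variable {σ R : Type*} [CommSemiring R]

theorem isSymmetric_expand {f : MvPolynomial σ R} (hf : f.IsSymmetric) (m : ℕ) :
    (expand m f).IsSymmetric := fun e => by
  rw [rename_expand, hf e]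

variable [LinearOrder σ]

theorem supDegree_toLex_expand {m : ℕ} (hm : m ≠ 0) (f : MvPolynomial σ R) :
    supDegree toLex (expand m f) = m • supDegree toLex f := by
  have smul_mono : Monotone fun d : Lex (σ →₀ ℕ) => m • d := fun _ _ h => nsmul_le_nsmul_right h m
  calc supDegree toLex (expand m f)
      = (f.support.image (m • ·)).sup toLex := by rw [← support_expand f hm]; rfl
    _ = f.support.sup fun d => m • toLex d := Finset.sup_image ..
    _ = m • supDegree toLex f :=
      (Finset.apply_sup_eq_sup_comp_of_linearOrder _ smul_mono (smul_zero m)).symm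

theorem leadingCoeff_toLex_expand [WellFoundedGT σ] {m : ℕ} (hm : m ≠ 0) (f : MvPolynomial σ R) :
    leadingCoeff toLex (expand m f) = leadingCoeff toLex f := by
  rw [leadingCoeff_toLex, leadingCoeff_toLex, supDegree_toLex_expand hm]
  exact coeff_expand_smul m hm f _

end Expand

/-- `g` is a nonzero symmetric polynomial whose lexicographically leading exponent is `μ`. -/
structure IsSymmetricWithLead {n : ℕ} {R : Type*} [CommSemiring R]
    (g : MvPolynomial (Fin n) R) (μ : Fin n → ℕ) : Prop where
  isSymmetric : g.IsSymmetric
  ne_zero : g ≠ 0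
  lead_eq : ⇑(ofLex (supDegree toLex g)) = μ

end LexLead

/-! ### Slim partitions -/

section Slim

open Fin (accumulate invAccumulate)

variable {r n : ℕ}

theorem isSlim_iff_invAccumulate_lt {l : Fin n → ℕ} :
    IsSlim r n l ↔ ∀ i, invAccumulate n n l i < r - 1 := by
  simp only [IsSlim, invAccumulate, Fin.is_lt, dite_true, Fin.eta]
  constructor
  · rintro ⟨h_step, h_last⟩ i
    split_ifs with hi
    · exact h_step i hi
    · simpa using h_last i (by omega)
  · intro h
    refine ⟨fun i hi => by simpa [hi] using h i, fun i hi => ?_⟩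
    simpa [show ¬ (i : ℕ) + 1 < n by omega] using h i

theorem antitone_accumulate (e : Fin n → ℕ) : Antitone (accumulate n n e) := fun i j hij => by
  rw [Fin.accumulate_apply, Fin.accumulate_apply]
  gcongr with a
  exact hij

theorem invAccumulate_accumulate (e : Fin n → ℕ) :
    invAccumulate n n (accumulate n n e) = e :=
  Fin.accumulate_injective le_rfl
    (Fin.accumulate_invAccumulate le_rfl (antitone_accumulate e))

/-- A slim partition is determined by its consecutive differences, which are arbitrary numbers
below `r - 1`. -/
noncomputable def slimEquiv (r n : ℕ) :
    {l : Fin n → ℕ // Antitone l ∧ IsSlim r n l} ≃ (Fin n → Fin (r - 1)) where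
  toFun l i := ⟨invAccumulate n n l i, isSlim_iff_invAccumulate_lt.1 l.2.2 i⟩
  invFun e := ⟨accumulate n n fun i => e i, antitone_accumulate _,
    isSlim_iff_invAccumulate_lt.2 fun i => by rw [invAccumulate_accumulate]; exact (e i).2⟩
  left_inv l := Subtype.ext (Fin.accumulate_invAccumulate le_rfl l.2.1)
  right_inv e := by ext i; simp only [invAccumulate_accumulate]

noncomputable instance : Fintype {l : Fin n → ℕ // Antitone l ∧ IsSlim r n l} :=
  Fintype.ofEquiv _ (slimEquiv r n).symm

theorem card_slim :
    Fintype.card {l : Fin n → ℕ // Antitone l ∧ IsSlim r n l} = (r - 1) ^ n := by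
  rw [Fintype.card_congr (slimEquiv r n), Fintype.card_fun, Fintype.card_fin, Fintype.card_fin]

end Slim

/-! ### Combinations with Frobenius coefficients -/

section Frobenius

variable {σ ι R : Type*} [CommSemiring R] [Fintype ι]

/-- The map `(h_μ) ↦ ∑ μ, 𝓕(h_μ) g_μ`, where `𝓕` raises every variable to the `m`-th power. -/
noncomputable def frobeniusCombination (m : ℕ) (g : ι → MvPolynomial σ R) :
    (ι → MvPolynomial σ R) →ₗ[R] MvPolynomial σ R :=
  ∑ μ, (LinearMap.mulRight R (g μ)).comp ((expand m).toLinearMap.comp (LinearMap.proj μ))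

theorem frobeniusCombination_apply (m : ℕ) (g h : ι → MvPolynomial σ R) :
    frobeniusCombination m g h = ∑ μ, expand m (h μ) * g μ := by
  simp [frobeniusCombination]

theorem frobeniusCombination_single [DecidableEq ι] (m : ℕ) (g : ι → MvPolynomial σ R) (μ : ι)
    (f : MvPolynomial σ R) :
    frobeniusCombination m g (Pi.single μ f) = expand m f * g μ := by
  rw [frobeniusCombination_apply, Finset.sum_eq_single_of_mem μ (Finset.mem_univ μ),
    Pi.single_eq_same]
  intro ν _ hν
  rw [Pi.single_eq_of_ne hν, map_zero, zero_mul]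

theorem expand_mul_mem_map_frobeniusCombination (m : ℕ) (g : ι → MvPolynomial σ R)
    {V : Submodule R (MvPolynomial σ R)} {f : MvPolynomial σ R} (hf : f ∈ V) (μ : ι) :
    expand m f * g μ ∈ (Submodule.pi Set.univ fun _ => V).map (frobeniusCombination m g) := by
  classical
  rw [← frobeniusCombination_single m g μ f]
  exact Submodule.mem_map_of_mem (Submodule.le_comap_single_pi (fun _ => V) hf)

/-- Every symmetric polynomial is a combination of the `g μ` whose coefficients are symmetric
polynomials in the `m`-th powers of the variables. -/
def SpansSymmetric (m : ℕ) (g : ι → MvPolynomial σ R) : Prop :=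
  (symmetricSubalgebra σ R).toSubmodule ≤
    (Submodule.pi Set.univ fun _ => (symmetricSubalgebra σ R).toSubmodule).map
      (frobeniusCombination m g)

end Frobenius

section Products

variable {σ ι κ R : Type*} [CommRing R] [Fintype ι] {m : ℕ} {g : ι → MvPolynomial σ R}
  {f : κ → MvPolynomial σ R}

theorem linearIndependent_expand_mul (hker : LinearMap.ker (frobeniusCombination m g) = ⊥)
    (hf : LinearIndependent R f) :
    LinearIndependent R fun p : κ × ι => expand m (f p.1) * g p.2 := by
  classical
  have independent_single := Pi.linearIndependent_single (fun (_ : ι) => f) fun _ => hf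
  have independent_map := independent_single.map' _ hker
  have reindex_injective : Function.Injective fun p : κ × ι => (⟨p.2, p.1⟩ : (_ : ι) × κ) := by
    rintro ⟨a, b⟩ ⟨c, d⟩ h
    cases h
    rfl
  simpa only [Function.comp_def, frobeniusCombination_single] using
    independent_map.comp _ reindex_injective

theorem span_range_expand_mul :
    Submodule.span R (Set.range fun p : κ × ι => expand m (f p.1) * g p.2) =
      (Submodule.pi Set.univ fun _ => Submodule.span R (Set.range f)).map
        (frobeniusCombination m g) := by
  apply le_antisymm
  · rw [Submodule.span_le]
    rintro _ ⟨p, rfl⟩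
    exact expand_mul_mem_map_frobeniusCombination m g
      (Submodule.subset_span (Set.mem_range_self p.1)) p.2
  · rintro _ ⟨h, hh, rfl⟩
    rw [frobeniusCombination_apply]
    refine Submodule.sum_mem _ fun μ _ => ?_
    have span_le : Submodule.span R (Set.range f) ≤
        (Submodule.span R (Set.range fun p : κ × ι => expand m (f p.1) * g p.2)).comap
          ((LinearMap.mulRight R (g μ)).comp (expand m).toLinearMap) := by
      rw [Submodule.span_le]
      rintro _ ⟨l, rfl⟩
      exact Submodule.subset_span ⟨(l, μ), rfl⟩
    exact span_le (hh μ (Set.mem_univ μ))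

end Products

/-! ### Division by slim leading exponents -/

section Spanning

open AddMonoidAlgebra
open Fin (accumulate invAccumulate)

variable {K : Type*} [Field K] {r n : ℕ}
  {g : {l : Fin n → ℕ // Antitone l ∧ IsSlim r n l} → MvPolynomial (Fin n) K}

theorem exists_slim_accumulate (hr : 2 ≤ r) {l : Fin n → ℕ} (hl : Antitone l) :
    ∃ (e : Fin n →₀ ℕ) (μ : {l : Fin n → ℕ // Antitone l ∧ IsSlim r n l}),
      l = (r - 1) • accumulate n n e + μ.1 := by
  set d := invAccumulate n n l
  refine ⟨Finsupp.equivFunOnFinite.symm fun i => d i / (r - 1),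
    (slimEquiv r n).symm fun i => ⟨d i % (r - 1), Nat.mod_lt _ (by omega)⟩, ?_⟩
  calc l = accumulate n n d := (Fin.accumulate_invAccumulate le_rfl hl).symm
    _ = accumulate n n ((r - 1) • (fun i => d i / (r - 1)) + fun i => d i % (r - 1)) := by
      congr 1
      exact funext fun i => (Nat.div_add_mod _ _).symm
    _ = _ := by rw [map_add, map_nsmul]; rfl

theorem exists_same_lex_leading_term (hr : 2 ≤ r) (hg : ∀ μ, IsSymmetricWithLead (g μ) μ.1)
    {f : MvPolynomial (Fin n) K} (hf : f.IsSymmetric) (hf0 : f ≠ 0) :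
    ∃ μ h, h.IsSymmetric ∧ supDegree toLex f = supDegree toLex (expand (r - 1) h * g μ) ∧
      leadingCoeff toLex f = leadingCoeff toLex (expand (r - 1) h * g μ) := by
  have hm : r - 1 ≠ 0 := by omega
  obtain ⟨e, μ, he⟩ := exists_slim_accumulate hr hf.antitone_supDegree
  have lead_g : leadingCoeff toLex (g μ) ≠ 0 :=
    (leadingCoeff_ne_zero toLex.injective).2 (hg μ).ne_zero
  have lead_f : leadingCoeff toLex f ≠ 0 := (leadingCoeff_ne_zero toLex.injective).2 hf0
  set c := leadingCoeff toLex f / leadingCoeff toLex (g μ) with hc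
  have hc0 : c ≠ 0 := div_ne_zero lead_f lead_g
  set h := esymmAlgHomMonomial (Fin n) e c
  have lead_h : leadingCoeff toLex (expand (r - 1) h) = c := by
    rw [leadingCoeff_toLex_expand hm, leadingCoeff_esymmAlgHomMonomial _ le_rfl]
  refine ⟨μ, h, isSymmetric_esymmAlgHomMonomial _ _, ?_, ?_⟩
  · rw [supDegree_mul toLex.injective toLex_add (by rw [lead_h]; exact mul_ne_zero hc0 lead_g)
      ((leadingCoeff_ne_zero toLex.injective).1 (lead_h.trans_ne hc0)) (hg μ).ne_zero,
      supDegree_toLex_expand hm, ← ofLex_inj, DFunLike.ext'_iff, he, ← (hg μ).lead_eq,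
      ← supDegree_esymmAlgHomMonomial hc0 e le_rfl]
    rfl
  · rw [leadingCoeff_mul toLex.injective toLex_add, lead_h, hc, div_mul_cancel₀ _ lead_g]

theorem exists_supDegree_sub_lt (hr : 2 ≤ r) (hg : ∀ μ, IsSymmetricWithLead (g μ) μ.1)
    {f : MvPolynomial (Fin n) K} (hf : f.IsSymmetric) (hf0 : f ≠ 0) :
    ∃ μ h, h.IsSymmetric ∧ (supDegree toLex (f - expand (r - 1) h * g μ) < supDegree toLex f ∨
      f = expand (r - 1) h * g μ) := by
  obtain ⟨μ, h, hh, deg_eq, lead_eq⟩ := exists_same_lex_leading_term hr hg hf hf0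
  exact ⟨μ, h, hh, supDegree_sub_lt_of_leadingCoeff_eq toLex.injective deg_eq lead_eq⟩

theorem spansSymmetric_of_isSymmetricWithLead (hr : 2 ≤ r)
    (hg : ∀ μ, IsSymmetricWithLead (g μ) μ.1) : SpansSymmetric (r - 1) g := by
  intro f hf
  induction hd : supDegree toLex f using WellFoundedLT.induction generalizing f with | _ d ih
  subst hd
  obtain rfl | hf0 := eq_or_ne f 0
  · exact Submodule.zero_mem _
  obtain ⟨μ, h, hh, hlt_or_eq⟩ := exists_supDegree_sub_lt hr hg hf hf0
  have mem_term := expand_mul_mem_map_frobeniusCombination (r - 1) g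
    (V := (symmetricSubalgebra (Fin n) K).toSubmodule) hh μ
  obtain hlt | heq := hlt_or_eq
  · have mem_rest := ih _ hlt (hf.sub ((isSymmetric_expand hh _).mul (hg μ).isSymmetric)) rfl
    simpa only [sub_add_cancel] using Submodule.add_mem _ mem_rest mem_term
  · rwa [heq]

end Spanning

/-! ### Highest partitions -/

section HighestPartition

open AddMonoidAlgebra

variable {n : ℕ}

theorem isSymmetric_msym (l : Fin n → ℕ) : (msym n l).IsSymmetric := by
  intro e
  have mem_orbit (w : Equiv.Perm (Fin n)) {a : Fin n → ℕ}
      (ha : a ∈ Finset.univ.image fun w : Equiv.Perm (Fin n) => l ∘ w) :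
      a ∘ w ∈ Finset.univ.image fun w : Equiv.Perm (Fin n) => l ∘ w := by
    obtain ⟨v, -, rfl⟩ := Finset.mem_image.1 ha
    exact Finset.mem_image.2 ⟨w.trans v, Finset.mem_univ _, rfl⟩
  rw [msym, map_sum]
  refine Finset.sum_nbij' (· ∘ e.symm) (· ∘ e) (fun _ => mem_orbit _) (fun _ => mem_orbit _)
    (fun a _ => by ext; simp) (fun a _ => by ext; simp) fun a _ => ?_
  rw [rename_monomial, ← Finsupp.equivMapDomain_eq_mapDomain]
  congr
  ext i
  simp only [Finsupp.equivMapDomain_apply, Finsupp.equivFunOnFinite_symm_apply_apply,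
    Function.comp_apply]

theorem support_msym (l : Fin n → ℕ) :
    (msym n l).support = Finset.univ.image fun w : Equiv.Perm (Fin n) =>
      Finsupp.equivFunOnFinite.symm (l ∘ w) := by
  ext d
  simp [msym, MvPolynomial.coeff_sum, coeff_monomial, Equiv.symm_apply_eq]

theorem msym_ne_zero (l : Fin n → ℕ) : msym n l ≠ 0 := by
  rw [Ne, ← support_eq_empty, support_msym]
  exact (Finset.univ_nonempty.image _).ne_empty

theorem supDegree_msym {l : Fin n → ℕ} (hl : Antitone l) :
    supDegree toLex (msym n l) = toLex (Finsupp.equivFunOnFinite.symm l) := by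
  obtain ⟨d, hd, hdeg⟩ := exists_supDegree_mem_support toLex (msym_ne_zero l)
  obtain ⟨w, -, rfl⟩ := Finset.mem_image.1 ((support_msym l).subset hd)
  have anti_w : Antitone (l ∘ w) := by
    have := (isSymmetric_msym l).antitone_supDegree
    rwa [hdeg] at this
  rw [hdeg, Tuple.unique_antitone (τ := 1) anti_w hl]
  rfl

theorem toLex_lt_of_domLT {a b : Fin n → ℕ} (h : DomLT n a b) :
    toLex (Finsupp.equivFunOnFinite.symm a) < toLex (Finsupp.equivFunOnFinite.symm b) := by
  obtain ⟨hne, -, partial_sum_le⟩ := h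
  refine lt_of_le_of_ne (not_lt.1 fun hlt => ?_) (by simpa using hne)
  obtain ⟨i, eq_before, lt_at⟩ := Finsupp.Lex.lt_iff.1 hlt
  refine (partial_sum_le i).not_gt (Finset.sum_lt_sum (fun j hj => ?_) ⟨i, by simp, lt_at⟩)
  obtain hji | rfl := (Finset.mem_filter.1 hj).2.lt_or_eq
  · exact (eq_before j hji).le
  · exact lt_at.le

theorem supDegree_smul_le {R A B : Type*} [Semiring R] [SemilatticeSup B] [OrderBot B]
    (D : A → B) (c : R) (f : R[A]) : supDegree D (c • f) ≤ supDegree D f :=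
  Finset.sup_mono Finsupp.support_smul

theorem isSymmetricWithLead_of_highestPartition {g : MvPolynomial (Fin n) ℂ} {μ : Fin n → ℕ}
    (h : HighestPartition n g μ) : IsSymmetricWithLead g μ := by
  obtain ⟨S, coef, hμS, hcoef, hS, rfl⟩ := h
  have lead_μ : supDegree toLex (coef μ • msym n μ) = supDegree toLex (msym n μ) :=
    (supDegree_smul_le ..).antisymm <| by
      simpa only [inv_smul_smul₀ hcoef] using
        supDegree_smul_le toLex (coef μ)⁻¹ (coef μ • msym n μ)
  have lead_lt (ν) (hν : ν ∈ S) (hne : ν ≠ μ) :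
      supDegree toLex (coef ν • msym n ν) < supDegree toLex (coef μ • msym n μ) :=
    calc supDegree toLex (coef ν • msym n ν)
        ≤ supDegree toLex (msym n ν) := supDegree_smul_le ..
      _ = toLex (Finsupp.equivFunOnFinite.symm ν) := supDegree_msym (hS ν hν).1
      _ < toLex (Finsupp.equivFunOnFinite.symm μ) :=
        toLex_lt_of_domLT ((hS ν hν).2.resolve_left hne)
      _ = supDegree toLex (coef μ • msym n μ) := by rw [lead_μ, supDegree_msym (hS μ hμS).1]
  obtain ⟨sum_deg, sum_lead⟩ := supDegree_leadingCoeff_sum_eq hμS lead_lt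
  refine ⟨?_, ?_, ?_⟩
  · exact Submodule.sum_mem (symmetricSubalgebra (Fin n) ℂ).toSubmodule
      fun ν _ => (isSymmetric_msym ν).smul (coef ν)
  · rw [← leadingCoeff_ne_zero toLex.injective, sum_lead, leadingCoeff_ne_zero toLex.injective]
    exact smul_ne_zero hcoef (msym_ne_zero μ)
  · rw [sum_deg, lead_μ, supDegree_msym (hS μ hμS).1]
    rfl

end HighestPartition

/-! ### Twists by roots of unity -/

section Twist

variable {σ K : Type*} {m : ℕ}

/-- The point obtained from `p` by multiplying its `i`-th coordinate by `q ^ s i`. When `q` is a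
primitive `m`-th root of unity, these are the points with the same `m`-th powers as `p`. -/
def twist {A : Type*} [Monoid A] (q : A) (p : σ → A) (s : σ → Fin m) : σ → A :=
  fun i => q ^ (s i : ℕ) * p i

theorem twist_pow {A : Type*} [CommMonoid A] {q : A} (hq : q ^ m = 1) (p : σ → A)
    (s : σ → Fin m) : twist q p s ^ m = p ^ m := by
  ext i
  rw [Pi.pow_apply, twist, mul_pow, pow_right_comm, hq, one_pow, one_mul, Pi.pow_apply]

theorem eq_and_eq_of_pow_mul_eq_pow_mul {A : Type*} [CommRing A] [IsDomain A] {q : A}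
    (hq : IsPrimitiveRoot q m) {p : σ → A} (hp0 : ∀ i, p i ≠ 0)
    (hp : Function.Injective (p ^ m)) {a b : Fin m} {i j : σ}
    (h : q ^ (a : ℕ) * p i = q ^ (b : ℕ) * p j) : a = b ∧ i = j := by
  have hij : (p ^ m) i = (p ^ m) j :=
    calc (p ^ m) i = (twist q p (fun _ => a) ^ m) i := by rw [twist_pow hq.pow_eq_one]
      _ = (twist q p (fun _ => b) ^ m) j := congrArg (· ^ m) h
      _ = (p ^ m) j := by rw [twist_pow hq.pow_eq_one]
  obtain rfl := hp hij
  exact ⟨Fin.ext (hq.pow_inj a.2 b.2 (mul_right_cancel₀ (hp0 i) h)), rfl⟩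

variable [Field K] [Fintype σ] {q : K} {p : σ → K}

/-- A symmetric polynomial which, among all twists of `p`, is nonzero only at `twist q p s`. -/
noncomputable def twistSeparator (q : K) (p : σ → K) (s : σ → Fin m) : MvPolynomial σ K :=
  ∏ i, ∏ x : Fin m × σ with x.1 ≠ s x.2, (X i - C (q ^ (x.1 : ℕ) * p x.2))

theorem isSymmetric_twistSeparator (s : σ → Fin m) : (twistSeparator q p s).IsSymmetric := by
  intro e
  simp only [twistSeparator, map_prod, map_sub, rename_X, rename_C]
  exact Equiv.prod_comp e fun i =>
    ∏ x : Fin m × σ with x.1 ≠ s x.2, (X i - C (q ^ (x.1 : ℕ) * p x.2))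

theorem eval_twist_twistSeparator_eq_zero_iff (hq : IsPrimitiveRoot q m) (hp0 : ∀ i, p i ≠ 0)
    (hp : Function.Injective (p ^ m)) {s s' : σ → Fin m} :
    eval (twist q p s') (twistSeparator q p s) = 0 ↔ s' ≠ s := by
  simp only [twistSeparator, map_prod, map_sub, eval_X, eval_C, Finset.prod_eq_zero_iff,
    Finset.mem_univ, true_and, Finset.mem_filter, sub_eq_zero, Prod.exists, Function.ne_iff]
  constructor
  · rintro ⟨i, a, j, ha, h⟩
    obtain ⟨rfl, rfl⟩ := eq_and_eq_of_pow_mul_eq_pow_mul hq hp0 hp h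
    exact ⟨i, ha⟩
  · rintro ⟨i, hi⟩
    exact ⟨i, s' i, i, hi, rfl⟩

end Twist

section TwistedValues

variable {σ ι K : Type*} {m : ℕ} [Field K] [Fintype ι] {q : K} {p : σ → K}
  {g : ι → MvPolynomial σ K}

theorem eval_twist_frobeniusCombination (hq : q ^ m = 1) (g h : ι → MvPolynomial σ K)
    (s : σ → Fin m) :
    eval (twist q p s) (frobeniusCombination m g h) =
      ∑ μ, eval (p ^ m) (h μ) * eval (twist q p s) (g μ) := by
  simp only [frobeniusCombination_apply, map_sum, map_mul, eval_expand, twist_pow hq]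

variable [Fintype σ]

theorem single_mem_span_eval_twist (hq : IsPrimitiveRoot q m) (hp0 : ∀ i, p i ≠ 0)
    (hp : Function.Injective (p ^ m)) (hg : SpansSymmetric m g) (s : σ → Fin m) :
    Pi.single s 1 ∈ Submodule.span K (Set.range fun μ s' => eval (twist q p s') (g μ)) := by
  obtain ⟨h, -, hh⟩ := hg (isSymmetric_twistSeparator (q := q) (p := p) s)
  set c := eval (twist q p s) (twistSeparator q p s)
  have hc : c ≠ 0 := by simp [c, eval_twist_twistSeparator_eq_zero_iff hq hp0 hp]
  have single_eq : c • Pi.single s 1 =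
      ∑ μ, eval (p ^ m) (h μ) • fun s' => eval (twist q p s') (g μ) := by
    ext s'
    have hs' := eval_twist_frobeniusCombination (p := p) hq.pow_eq_one g h s'
    simp only [hh] at hs'
    simp only [Finset.sum_apply, Pi.smul_apply, smul_eq_mul, ← hs']
    obtain rfl | hne := eq_or_ne s' s
    · rw [Pi.single_eq_same, mul_one]
    · rw [Pi.single_eq_of_ne hne, mul_zero,
        (eval_twist_twistSeparator_eq_zero_iff hq hp0 hp).2 hne]
  rw [← inv_smul_smul₀ hc (Pi.single s 1), single_eq]
  exact Submodule.smul_mem _ _ (Submodule.sum_mem _ fun μ _ =>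
    Submodule.smul_mem _ _ (Submodule.subset_span ⟨μ, rfl⟩))

theorem linearIndependent_eval_twist (hq : IsPrimitiveRoot q m) (hp0 : ∀ i, p i ≠ 0)
    (hp : Function.Injective (p ^ m)) (hg : SpansSymmetric m g)
    (hcard : Fintype.card ι ≤ m ^ Fintype.card σ) :
    LinearIndependent K fun (μ : ι) (s : σ → Fin m) => eval (twist q p s) (g μ) := by
  classical
  have card_le_finrank : Fintype.card ι ≤ Module.finrank K ((σ → Fin m) → K) := by
    rwa [Module.finrank_fintype_fun_eq_card, Fintype.card_fun, Fintype.card_fin]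
  refine linearIndependent_of_top_le_span_of_card_le_finrank ?_ card_le_finrank
  refine (Pi.basisFun K (σ → Fin m)).span_eq.ge.trans (Submodule.span_le.2 ?_)
  rintro _ ⟨s, rfl⟩
  rw [Pi.basisFun_apply]
  exact single_mem_span_eval_twist hq hp0 hp hg s

theorem eval_pow_eq_zero_of_eval_twist_eq_zero (hq : IsPrimitiveRoot q m)
    (hp0 : ∀ i, p i ≠ 0) (hp : Function.Injective (p ^ m)) (hg : SpansSymmetric m g)
    (hcard : Fintype.card ι ≤ m ^ Fintype.card σ) {h : ι → MvPolynomial σ K}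
    (hh : ∀ s : σ → Fin m, eval (twist q p s) (frobeniusCombination m g h) = 0) (μ : ι) :
    eval (p ^ m) (h μ) = 0 := by
  have independent := linearIndependent_eval_twist hq hp0 hp hg hcard
  rw [Fintype.linearIndependent_iff] at independent
  refine independent (fun μ => eval (p ^ m) (h μ)) (funext fun s => ?_) μ
  simp only [Finset.sum_apply, Pi.smul_apply, smul_eq_mul, Pi.zero_apply]
  rw [← eval_twist_frobeniusCombination hq.pow_eq_one, hh s]

end TwistedValues

/-! ### Passage to generic points -/

section Generic

variable {σ τ ι : Type*}

theorem eval_bind₁ {R : Type*} [CommSemiring R] (v : τ → R) (P : σ → MvPolynomial τ R)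
    (f : MvPolynomial σ R) : eval v (bind₁ P f) = eval (fun i => eval v (P i)) f :=
  eval₂Hom_bind₁ (RingHom.id R) v P f

variable {K : Type*} [Field K] [Infinite K]

theorem eq_zero_of_eval_eq_zero_of_injective [Finite σ] {P : σ → MvPolynomial τ K}
    (hP0 : ∀ i, P i ≠ 0) (hP : Function.Injective P) {f : MvPolynomial τ K}
    (hf : ∀ v, (∀ i, eval v (P i) ≠ 0) → (Function.Injective fun i => eval v (P i)) →
      eval v f = 0) : f = 0 := by
  classical
  have := Fintype.ofFinite σ
  set D := (∏ i, P i) * ∏ x ∈ (Finset.univ : Finset σ).offDiag, (P x.1 - P x.2)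
  have hD : D ≠ 0 := mul_ne_zero (Finset.prod_ne_zero_iff.2 fun i _ => hP0 i)
    (Finset.prod_ne_zero_iff.2 fun x hx =>
      sub_ne_zero.2 (hP.ne (Finset.mem_offDiag.1 hx).2.2))
  refine (mul_eq_zero.1 (MvPolynomial.funext fun v => ?_)).resolve_left hD
  rw [map_mul, map_zero, mul_eq_zero, or_iff_not_imp_left]
  intro hv
  simp only [D, map_mul, map_prod, map_sub, mul_eq_zero, not_or, Finset.prod_eq_zero_iff,
    Finset.mem_univ, true_and, Finset.mem_offDiag, not_exists, not_and, sub_eq_zero] at hv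
  refine hf v hv.1 fun i j hij => ?_
  by_contra hne
  exact hv.2 (i, j) hne hij

variable [Fintype σ] [Fintype ι] {m : ℕ} {q : K} {g : ι → MvPolynomial σ K}

theorem bind₁_pow_eq_zero_of_bind₁_twist_eq_zero (hm : m ≠ 0) (hq : IsPrimitiveRoot q m)
    (hg : SpansSymmetric m g) (hcard : Fintype.card ι ≤ m ^ Fintype.card σ)
    {P : σ → MvPolynomial τ K} (hP0 : ∀ i, P i ≠ 0) (hP : Function.Injective (P ^ m))
    {h : ι → MvPolynomial σ K}
    (hh : ∀ s : σ → Fin m, bind₁ (twist (C q) P s) (frobeniusCombination m g h) = 0) (μ : ι) :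
    bind₁ (P ^ m) (h μ) = 0 := by
  refine eq_zero_of_eval_eq_zero_of_injective (fun i => pow_ne_zero m (hP0 i)) hP
    fun v hv0 hv => ?_
  set p : σ → K := fun i => eval v (P i)
  have eval_pow (i) : eval v ((P ^ m) i) = (p ^ m) i := map_pow ..
  simp only [eval_bind₁, ← Pi.pow_apply, eval_pow] at hv0 hv ⊢
  refine eval_pow_eq_zero_of_eval_twist_eq_zero hq (fun i => ?_) hv hg hcard (fun s => ?_) μ
  · exact ne_zero_pow hm (hv0 i)
  · have hs := congrArg (eval v) (hh s)
    simp only [eval_bind₁, twist, map_mul, map_pow, eval_C, map_zero] at hs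
    exact hs

theorem ker_frobeniusCombination (hm : m ≠ 0) (hq : IsPrimitiveRoot q m)
    (hg : SpansSymmetric m g) (hcard : Fintype.card ι ≤ m ^ Fintype.card σ) :
    LinearMap.ker (frobeniusCombination m g) = ⊥ := by
  refine LinearMap.ker_eq_bot'.2 fun h hh => funext fun μ => ?_
  have X_pow_injective : Function.Injective ((X : σ → MvPolynomial σ K) ^ m) := by
    intro i j hij
    refine X_injective (R := K) (expand_injective (Nat.pos_of_ne_zero hm) ?_)
    rw [expand_X, expand_X]
    exact hij
  rw [Pi.zero_apply, ← expand_eq_zero (Nat.pos_of_ne_zero hm)]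
  exact bind₁_pow_eq_zero_of_bind₁_twist_eq_zero hm hq hg hcard X_ne_zero X_pow_injective
    (fun s => by rw [hh, map_zero]) μ

end Generic

/-! ### Wheel conditions -/

section Wheel

variable {K : Type*} [Field K] {n k m : ℕ} {t : K}

/-- Up to `m`-th roots of unity, the first `k + 1` coordinates of `z` are proportional to
`1, t, …, t ^ k`: the union of the planes in the wheel condition of `F_n^{(k,m+1)}`. Comparing
`m`-th powers avoids choosing the exponents of a primitive `m`-th root of unity. -/
def IsWheel (k m : ℕ) (t : K) (z : Fin n → K) : Prop :=
  ∃ x, ∀ j : Fin n, (j : ℕ) ≤ k → z j ^ m = (t ^ (j : ℕ) * x) ^ m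

theorem IsWheel.pow {z : Fin n → K} (hz : IsWheel k m t z) : IsWheel k 1 (t ^ m) (z ^ m) := by
  obtain ⟨x, hx⟩ := hz
  refine ⟨x ^ m, fun j hj => ?_⟩
  rw [pow_one, pow_one, Pi.pow_apply, hx j hj, mul_pow, pow_right_comm]

/-- The space `F_n^{(k,m+1)}` of symmetric polynomials satisfying the wheel condition. -/
noncomputable def wheelSpace (n k m : ℕ) (t : K) : Submodule K (MvPolynomial (Fin n) K) :=
  (symmetricSubalgebra (Fin n) K).toSubmodule ⊓
    (vanishingIdeal K {z | IsWheel k m t z}).restrictScalars K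

theorem mem_wheelSpace {f : MvPolynomial (Fin n) K} :
    f ∈ wheelSpace n k m t ↔ f.IsSymmetric ∧ ∀ z, IsWheel k m t z → eval z f = 0 := by
  simp [wheelSpace, aeval_eq_eval]

theorem exists_perm_pow_eq_pow {t' : K} (hkn : k < n) (ht : IsPrimitiveRoot t (k + 1))
    (ht' : IsPrimitiveRoot t' (k + 1)) :
    ∃ e : Equiv.Perm (Fin n), ∀ j : Fin n, (j : ℕ) ≤ k →
      (e j : ℕ) ≤ k ∧ t' ^ (e j : ℕ) = t ^ (j : ℕ) := by
  have exists_pow_eq (j : ℕ) : ∃ d < k + 1, t' ^ d = t ^ j :=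
    ht'.eq_pow_of_pow_eq_one (by rw [pow_right_comm, ht.pow_eq_one, one_pow])
  choose d hdk hd using exists_pow_eq
  set e : Fin n → Fin n := fun j => if (j : ℕ) ≤ k then ⟨d j, (hdk j).trans_le hkn⟩ else j with he
  have e_injective : Function.Injective e := by
    intro i j hij
    have hi := hdk i
    have hj := hdk j
    simp only [he] at hij
    split_ifs at hij with hik hjk hjk
    · have pow_eq : t ^ (i : ℕ) = t ^ (j : ℕ) := by rw [← hd, ← hd, Fin.mk.inj hij]
      exact Fin.ext (ht.pow_inj (by omega) (by omega) pow_eq)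
    · exact absurd (Fin.ext_iff.1 hij) (by dsimp only; omega)
    · exact absurd (Fin.ext_iff.1 hij) (by dsimp only; omega)
    · exact hij
  refine ⟨Equiv.ofBijective e (Finite.injective_iff_bijective.1 e_injective), fun j hj => ?_⟩
  simp only [Equiv.ofBijective_apply, he, if_pos hj]
  exact ⟨Nat.lt_succ_iff.1 (hdk j), hd j⟩

theorem wheelSpace_one_le {t' : K} (hkn : k < n) (ht : IsPrimitiveRoot t (k + 1))
    (ht' : IsPrimitiveRoot t' (k + 1)) : wheelSpace n k 1 t ≤ wheelSpace n k 1 t' := by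
  intro f hf
  obtain ⟨hsymm, hzero⟩ := mem_wheelSpace.1 hf
  refine mem_wheelSpace.2 ⟨hsymm, fun z ⟨x, hx⟩ => ?_⟩
  obtain ⟨e, he⟩ := exists_perm_pow_eq_pow hkn ht ht'
  have isWheel_comp : IsWheel k 1 t (z ∘ e) :=
    ⟨x, fun j hj => by rw [Function.comp_apply, hx _ (he j hj).1, (he j hj).2]⟩
  rw [← hsymm e, eval_rename]
  exact hzero _ isWheel_comp

theorem wheelSpace_one_congr {t' : K} (hkn : k < n) (ht : IsPrimitiveRoot t (k + 1))
    (ht' : IsPrimitiveRoot t' (k + 1)) : wheelSpace n k 1 t = wheelSpace n k 1 t' :=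
  (wheelSpace_one_le hkn ht ht').antisymm (wheelSpace_one_le hkn ht' ht)

theorem coe_wheelSpace_one : (wheelSpace n k 1 t : Set (MvPolynomial (Fin n) K)) =
    {f | f.IsSymmetric ∧ ∀ (x : K) (y : Fin n → K),
      eval (fun j : Fin n => if (j : ℕ) ≤ k then t ^ (j : ℕ) * x else y j) f = 0} := by
  ext f
  rw [SetLike.mem_coe, mem_wheelSpace, Set.mem_ofPred_eq]
  refine and_congr_right fun _ => ⟨fun hf x y => hf _ ⟨x, fun j hj => ?_⟩, ?_⟩
  · simp only [hj, if_true]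
  rintro hf z ⟨x, hx⟩
  convert hf x z with j
  split_ifs with hj
  · simpa only [pow_one] using hx j hj
  · rfl

theorem exists_eq_pow_mul_of_pow_eq {q a b : K} (hm : m ≠ 0) (hq : IsPrimitiveRoot q m)
    (h : a ^ m = b ^ m) : ∃ s < m, a = q ^ s * b := by
  have : NeZero m := ⟨hm⟩
  obtain rfl | hb := eq_or_ne b 0
  · rw [zero_pow hm] at h
    exact ⟨0, Nat.pos_of_ne_zero hm, by rw [eq_zero_of_pow_eq_zero h, mul_zero]⟩
  · obtain ⟨s, hs, hab⟩ := hq.eq_pow_of_pow_eq_one (ξ := a / b)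
      (by rw [div_pow, h, div_self (pow_ne_zero m hb)])
    exact ⟨s, hs, by rw [hab, div_mul_cancel₀ a hb]⟩

theorem isWheel_iff_exists_exponents {q : K} (hkn : k < n) (hm : m ≠ 0)
    (hq : IsPrimitiveRoot q m) {z : Fin n → K} :
    IsWheel k m t z ↔ ∃ s : ℕ → ℕ, (∀ i, s i ≤ m - 1) ∧ ∃ x, ∃ y : Fin n → K,
      z = fun j : Fin n => if (j : ℕ) = 0 then x
        else if (j : ℕ) ≤ k then t ^ (j : ℕ) * q ^ s j * x else y j := by
  constructor
  · rintro ⟨x, hx⟩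
    have pow_zero_eq := hx ⟨0, by omega⟩ (Nat.zero_le k)
    rw [pow_zero, one_mul] at pow_zero_eq
    have exists_exponent (i : ℕ) : ∃ s < m, ∀ hi : i ≤ k,
        z ⟨i, by omega⟩ = q ^ s * (t ^ i * z ⟨0, by omega⟩) := by
      by_cases hi : i ≤ k
      · obtain ⟨s, hs, hzs⟩ := exists_eq_pow_mul_of_pow_eq hm hq
          (a := z ⟨i, by omega⟩) (b := t ^ i * z ⟨0, by omega⟩)
          (by rw [hx _ hi, mul_pow, mul_pow, pow_zero_eq])
        exact ⟨s, hs, fun _ => hzs⟩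
      · exact ⟨0, Nat.pos_of_ne_zero hm, fun h => absurd h hi⟩
    choose s hsm hs using exists_exponent
    refine ⟨s, fun i => Nat.le_sub_one_of_lt (hsm i), z ⟨0, by omega⟩, z, funext fun j => ?_⟩
    split_ifs with hj0 hjk
    · exact congrArg z (Fin.ext hj0)
    · rw [mul_comm (t ^ (j : ℕ)), mul_assoc]
      exact hs j hjk
    · rfl
  · rintro ⟨s, -, x, y, rfl⟩
    refine ⟨x, fun j hj => ?_⟩
    dsimp only
    split_ifs with hj0
    · rw [hj0, pow_zero, one_mul]
    · rw [mul_right_comm, mul_pow, pow_right_comm q, hq.pow_eq_one, one_pow, mul_one]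

theorem coe_wheelSpace {q : K} (hkn : k < n) (hm : m ≠ 0) (hq : IsPrimitiveRoot q m) :
    (wheelSpace n k m t : Set (MvPolynomial (Fin n) K)) =
      {f | f.IsSymmetric ∧ ∀ s : ℕ → ℕ, (∀ i, s i ≤ m - 1) → ∀ (x : K) (y : Fin n → K),
        eval (fun j : Fin n => if (j : ℕ) = 0 then x
          else if (j : ℕ) ≤ k then t ^ (j : ℕ) * q ^ s j * x else y j) f = 0} := by
  ext f
  rw [SetLike.mem_coe, mem_wheelSpace, Set.mem_ofPred_eq]
  refine and_congr_right fun _ => ?_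
  simp only [isWheel_iff_exists_exponents hkn hm hq]
  exact ⟨fun hf s hs x y => hf _ ⟨s, hs, x, y, rfl⟩,
    fun hf z ⟨s, hs, x, y, hz⟩ => hz ▸ hf s hs x y⟩

end Wheel

/-! ### The generic point of a wheel -/

section GenericWheel

variable {K : Type*} [Field K] {n k m : ℕ} {t u : K}

/-- The generic point with first coordinates `x, u x, …, u ^ k x`, where `x` is `X none` and the
remaining coordinates are independent variables. -/
noncomputable def genericWheel (n k : ℕ) (u : K) (j : Fin n) :
    MvPolynomial (Option (Fin n)) K :=
  if (j : ℕ) ≤ k then C (u ^ (j : ℕ)) * X none else X (some j)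

theorem genericWheel_ne_zero (hu : u ≠ 0) (j : Fin n) : genericWheel n k u j ≠ 0 := by
  rw [genericWheel]
  split_ifs
  · exact mul_ne_zero (C_ne_zero.2 (pow_ne_zero _ hu)) (X_ne_zero _)
  · exact X_ne_zero _

theorem genericWheel_injective (hu : IsPrimitiveRoot u (k + 1)) :
    Function.Injective (genericWheel n k u) := by
  have eval_ne (i j : Fin n) : C (u ^ (i : ℕ)) * X none ≠ X (R := K) (some j) := by
    intro h
    have := congrArg (eval fun o => Option.elim o 1 fun _ => 0) h
    simp [hu.ne_zero] at this
  intro i j hij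
  simp only [genericWheel] at hij
  split_ifs at hij with hi hj hj
  · have pow_eq := C_injective _ _ (mul_right_cancel₀ (X_ne_zero none) hij)
    exact Fin.ext (hu.pow_inj (by omega) (by omega) pow_eq)
  · exact absurd hij (eval_ne i j)
  · exact absurd hij.symm (eval_ne j i)
  · exact Option.some_injective _ (X_injective hij)

theorem genericWheel_pow (j : Fin n) :
    genericWheel n k u j ^ m = expand m (genericWheel n k (u ^ m) j) := by
  simp only [genericWheel]
  split_ifs
  · rw [map_mul, expand_C, expand_X, mul_pow, ← C_pow, pow_right_comm]
  · rw [expand_X]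

theorem eval_eq_zero_of_bind₁_genericWheel {f : MvPolynomial (Fin n) K}
    (hf : bind₁ (genericWheel n k u) f = 0) {z : Fin n → K} (hz : IsWheel k 1 u z) :
    eval z f = 0 := by
  obtain ⟨x, hx⟩ := hz
  set v : Option (Fin n) → K := fun o => o.elim x z
  have eval_genericWheel : (fun j => eval v (genericWheel n k u j)) = z := by
    ext j
    rw [genericWheel]
    split_ifs with hj
    · simpa [v, eq_comm] using hx j hj
    · exact eval_X _
  rw [← eval_genericWheel, ← eval_bind₁, hf, map_zero]

theorem bind₁_twist_genericWheel_eq_zero [Infinite K] {q : K} (hq : q ^ m = 1)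
    {f : MvPolynomial (Fin n) K} (hf : f ∈ wheelSpace n k m t) (s : Fin n → Fin m) :
    bind₁ (twist (C q) (genericWheel n k t) s) f = 0 := by
  refine MvPolynomial.funext fun v => ?_
  rw [eval_bind₁, map_zero]
  refine (mem_wheelSpace.1 hf).2 _ ⟨v none, fun j hj => ?_⟩
  have twist_pow_apply := congrFun (twist_pow (q := (C q : MvPolynomial (Option (Fin n)) K))
    (by rw [← C_pow, hq, C_1]) (genericWheel n k t) s) j
  rw [Pi.pow_apply, Pi.pow_apply] at twist_pow_apply
  rw [← map_pow, twist_pow_apply, genericWheel, if_pos hj, map_pow, map_mul, eval_C, eval_X]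

end GenericWheel

section FrobeniusWheel

variable {K ι : Type*} [Field K] [Fintype ι] {n k m : ℕ} {t q : K}
  {g : ι → MvPolynomial (Fin n) K}

theorem frobeniusCombination_mem_wheelSpace (hg : ∀ μ, (g μ).IsSymmetric)
    {h : ι → MvPolynomial (Fin n) K} (hh : ∀ μ, h μ ∈ wheelSpace n k 1 (t ^ m)) :
    frobeniusCombination m g h ∈ wheelSpace n k m t := by
  rw [frobeniusCombination_apply]
  refine Submodule.sum_mem _ fun μ _ => ?_
  obtain ⟨hsymm, hzero⟩ := mem_wheelSpace.1 (hh μ)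
  refine mem_wheelSpace.2 ⟨(isSymmetric_expand hsymm m).mul (hg μ), fun z hz => ?_⟩
  rw [map_mul, eval_expand, hzero _ hz.pow, zero_mul]

variable [Infinite K]

theorem coeff_mem_wheelSpace (hm : m ≠ 0) (hq : IsPrimitiveRoot q m)
    (hg : SpansSymmetric m g) (hcard : Fintype.card ι ≤ m ^ n)
    (htm : IsPrimitiveRoot (t ^ m) (k + 1)) {h : ι → MvPolynomial (Fin n) K}
    (hsymm : ∀ μ, (h μ).IsSymmetric) (hh : frobeniusCombination m g h ∈ wheelSpace n k m t)
    (μ : ι) : h μ ∈ wheelSpace n k 1 (t ^ m) := by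
  have ht : t ≠ 0 := ne_zero_pow hm (htm.ne_zero (Nat.succ_ne_zero k))
  have expand_injective := expand_injective (R := K) (σ := Option (Fin n)) (Nat.pos_of_ne_zero hm)
  have generic_pow : genericWheel n k t ^ m = fun j => expand m (genericWheel n k (t ^ m) j) :=
    funext genericWheel_pow
  have vanishes := bind₁_pow_eq_zero_of_bind₁_twist_eq_zero hm hq hg
    (by rwa [Fintype.card_fin]) (genericWheel_ne_zero (k := k) ht)
    (generic_pow ▸ expand_injective.comp (genericWheel_injective htm))
    (bind₁_twist_genericWheel_eq_zero hq.pow_eq_one hh) μ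
  rw [generic_pow, ← expand_bind₁, expand_eq_zero (Nat.pos_of_ne_zero hm)] at vanishes
  exact mem_wheelSpace.2 ⟨hsymm μ, fun z hz => eval_eq_zero_of_bind₁_genericWheel vanishes hz⟩

theorem map_frobeniusCombination_wheelSpace (hm : m ≠ 0) (hcop : (k + 1).Coprime m)
    (ht : IsPrimitiveRoot t (k + 1)) (hq : IsPrimitiveRoot q m) (hkn : k < n)
    (hg : ∀ μ, (g μ).IsSymmetric) (hspan : SpansSymmetric m g)
    (hcard : Fintype.card ι ≤ m ^ n) :
    (Submodule.pi Set.univ fun _ => wheelSpace n k 1 t).map (frobeniusCombination m g) =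
      wheelSpace n k m t := by
  have htm : IsPrimitiveRoot (t ^ m) (k + 1) := ht.pow_of_coprime m hcop.symm
  rw [wheelSpace_one_congr hkn ht htm]
  apply le_antisymm
  · rintro _ ⟨h, hh, rfl⟩
    exact frobeniusCombination_mem_wheelSpace hg fun μ => hh μ (Set.mem_univ μ)
  · intro f hf
    obtain ⟨h, hsymm, rfl⟩ := hspan (mem_wheelSpace.1 hf).1
    exact ⟨h, fun μ _ => coeff_mem_wheelSpace hm hq hspan hcard htm
      (fun μ => hsymm μ (Set.mem_univ μ)) hf μ, rfl⟩

end FrobeniusWheel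

theorem basis_of_Fkr_general {K κ : Type*} [Field K] [Infinite K] {k r n : ℕ} (hr : 2 ≤ r)
    (hcop : (k + 1).Coprime (r - 1)) {t q : K} (ht : IsPrimitiveRoot t (k + 1))
    (hq : IsPrimitiveRoot q (r - 1)) (hkn : k < n)
    {g : {l : Fin n → ℕ // Antitone l ∧ IsSlim r n l} → MvPolynomial (Fin n) K}
    (hg : ∀ μ, IsSymmetricWithLead (g μ) μ.1) {f : κ → MvPolynomial (Fin n) K}
    (hf : LinearIndependent K f)
    (hf_span : Submodule.span K (Set.range f) = wheelSpace n k 1 t) :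
    LinearIndependent K (fun p : κ × {l : Fin n → ℕ // Antitone l ∧ IsSlim r n l} =>
      expand (r - 1) (f p.1) * g p.2) ∧
    Submodule.span K (Set.range fun p : κ × {l : Fin n → ℕ // Antitone l ∧ IsSlim r n l} =>
      expand (r - 1) (f p.1) * g p.2) = wheelSpace n k (r - 1) t := by
  have hm : r - 1 ≠ 0 := by omega
  have hspan := spansSymmetric_of_isSymmetricWithLead hr hg
  constructor
  · refine linearIndependent_expand_mul (ker_frobeniusCombination hm hq hspan ?_) hf
    rw [card_slim, Fintype.card_fin]
  · rw [span_range_expand_mul, hf_span]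
    exact map_frobeniusCombination_wheelSpace hm hcop ht hq hkn (fun μ => (hg μ).isSymmetric)
      hspan card_slim.le

/-- Theorem 4.8 / "basis thm": choose for each `(r-1)`-slim `μ ∈ π_n` a
symmetric polynomial `g_μ` with highest partition `μ`, and let `{f̃_λ}`, `λ` ranging over
the admissible partitions in `π_n`, be any `ℂ`-basis of `F_n^{(k,2)}`; set
`f_λ = 𝓕(f̃_λ)`.  Then the products `{f_λ g_μ}` form a `ℂ`-basis of `F_n^{(k,r)}`. -/
theorem basis_of_Fkr
    (k r n : ℕ) (hk : 0 < k) (hr : 2 ≤ r) (hcop : Nat.Coprime (k + 1) (r - 1))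
    (t q : ℂ) (ht : IsPrimitiveRoot t (k + 1)) (hq : IsPrimitiveRoot q (r - 1))
    (hn : k < n)
    (g : {l : Fin n → ℕ // Antitone l ∧ IsSlim r n l} → MvPolynomial (Fin n) ℂ)
    (hg : ∀ μ, HighestPartition n (g μ) μ.1)
    (ftil : {l : Fin n → ℕ // Antitone l ∧
        ∀ i : ℕ, (Finset.univ.filter fun a : Fin n => l a = i).card ≤ k}
      → MvPolynomial (Fin n) ℂ)
    (hftil_indep : LinearIndependent ℂ ftil)
    (hftil_span : Submodule.span ℂ (Set.range ftil) =
      Submodule.span ℂ {f : MvPolynomial (Fin n) ℂ |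
        f.IsSymmetric ∧
        ∀ (x : ℂ) (y : Fin n → ℂ),
          MvPolynomial.eval
            (fun j : Fin n => if (j : ℕ) ≤ k then t ^ (j : ℕ) * x else y j) f = 0}) :
    LinearIndependent ℂ
      (fun p : {l : Fin n → ℕ // Antitone l ∧
            ∀ i : ℕ, (Finset.univ.filter fun a : Fin n => l a = i).card ≤ k} ×
          {l : Fin n → ℕ // Antitone l ∧ IsSlim r n l} =>
        Frob r n (ftil p.1) * g p.2) ∧
    Submodule.span ℂ
      (Set.range fun p : {l : Fin n → ℕ // Antitone l ∧
            ∀ i : ℕ, (Finset.univ.filter fun a : Fin n => l a = i).card ≤ k} ×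
          {l : Fin n → ℕ // Antitone l ∧ IsSlim r n l} =>
        Frob r n (ftil p.1) * g p.2) =
      Submodule.span ℂ {f : MvPolynomial (Fin n) ℂ |
        f.IsSymmetric ∧
        ∀ (s : ℕ → ℕ), (∀ i, s i ≤ r - 2) → ∀ (x : ℂ) (y : Fin n → ℂ),
          MvPolynomial.eval
            (fun j : Fin n => if (j : ℕ) = 0 then x
              else if (j : ℕ) ≤ k then t ^ (j : ℕ) * q ^ (s (j : ℕ)) * x else y j)
            f = 0} := by
  have span_ftil : Submodule.span ℂ (Set.range ftil) = wheelSpace n k 1 t := by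
    rw [hftil_span, ← coe_wheelSpace_one, Submodule.span_eq]
  have hm : r - 1 ≠ 0 := by omega
  rw [show r - 2 = r - 1 - 1 by omega, ← coe_wheelSpace hn hm hq, Submodule.span_eq]
  exact basis_of_Fkr_general hr hcop ht hq hn
    (fun μ => isSymmetricWithLead_of_highestPartition (hg μ)) hftil_indep span_ftil
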